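/- For a ∈ A and b ∈ B, the map (l ⊗ g) ⊗ (l' ⊗ g') ↦ t⟨|l'|,|g|⟩ t⟨a,|g|⟩ t⟨|l'|,b⟩ (l ⊗ l') ⊗ (g ⊗ g') is an isomorphism of graded (Λ ⊗_k^t Γ)^e-modules from (Λ ⊗_k^t Γ)^e⟨a,b⟩ to Λ^e⟨a⟩ ⊗_k^t Γ^e⟨b⟩. In particular the twisted tensor product of a graded projective Λ^e-module and a graded projective Γ^e-module is a graded projective (Λ ⊗_k^t Γ)^e-module. -/

import Mathlib

open TensorProduct MulOpposite

/-!
After rescaling by the twist, `e` identifies `Λᵉ ⊗ Γᵉ` with `Tᵉ`, whose multiplication and whose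
actions on `Λᵉ⟨a⟩ ⊗ Γᵉ⟨b⟩` and on `P ⊗ Q` become componentwise up to bicharacters. The isomorphism
is the action on `1 ⊗ 1`, which multiplies each homogeneous component by a unit.

For projectivity, take a `Λᵉ`-linear section of the action map `Λᵉ ⊗ P → P` and a `Γᵉ`-linear
section of `Γᵉ ⊗ Q → Q`, and tensor them. The result is `Tᵉ`-linear once the sections commute with
the diagonal operators that perform the twists, which is achieved by projecting them onto joint
eigenspaces. This needs the twist on `Q` to be compatible with the twist on `Γᵉ`, and likewise for
`P` and `Λᵉ`. In a degree of `Λᵉ` whose twists on `Q` and `Γᵉ` are not compatible, associativity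
forces the elements of that degree to act on `P` by zero, so linearity over them is automatic.
-/

open DirectSum (Decomposition)

section Decomposition

variable {k ι M N : Type*} [CommSemiring k] [DecidableEq ι] [AddCommMonoid M] [Module k M]
  [AddCommMonoid N] [Module k N] (𝓜 : ι → Submodule k M)

/-- A decomposition given by a linear map that splits the summation map and sends each piece to
the corresponding summand; then it is automatically a two-sided inverse. -/
noncomputable abbrev decompositionOfLinearMap (D : M →ₗ[k] DirectSum ι fun i ↦ 𝓜 i)
    (sum_D : ∀ m, DirectSum.coeLinearMap 𝓜 (D m) = m)
    (D_mem : ∀ i, ∀ m ∈ 𝓜 i, D m ∈ LinearMap.range (DirectSum.lof k ι (fun i ↦ 𝓜 i) i)) :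
    Decomposition 𝓜 :=
  .ofLinearMap 𝓜 D (LinearMap.ext sum_D) <| DirectSum.linearMap_ext k fun i ↦
    LinearMap.ext fun m ↦ by
      obtain ⟨m', hm'⟩ := D_mem i m m.2
      have m'_eq : (m' : M) = m := by
        rw [← sum_D m, ← hm', DirectSum.coeLinearMap_lof]
      simp [← hm', Subtype.ext m'_eq]

variable [Decomposition 𝓜]

/-- The linear map given by a family of linear maps on the homogeneous components. -/
noncomputable def homogeneousLift (f : ∀ i, 𝓜 i →ₗ[k] N) : M →ₗ[k] N :=
  DirectSum.toModule k ι N f ∘ₗ (DirectSum.decomposeLinearEquiv 𝓜).toLinearMap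

variable {𝓜}

@[simp]
theorem homogeneousLift_coe (f : ∀ i, 𝓜 i →ₗ[k] N) {i : ι} (m : 𝓜 i) :
    homogeneousLift 𝓜 f m = f i m := by
  simp [homogeneousLift, DirectSum.toModule_lof]

theorem hom_ext_of_mem {f g : M →ₗ[k] N} (h : ∀ i, ∀ m ∈ 𝓜 i, f m = g m) : f = g :=
  DirectSum.decompose_lhom_ext 𝓜 fun i ↦ LinearMap.ext fun m ↦ h i m m.2

variable (𝓜)

/-- The diagonal operator acting on the homogeneous component `𝓜 i` as the unit `u i`. -/
noncomputable def scale (u : ι → kˣ) : M ≃ₗ[k] M :=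
  .ofLinearMap (homogeneousLift 𝓜 fun i ↦ (u i : k) • (𝓜 i).subtype)
    (homogeneousLift 𝓜 fun i ↦ (↑(u i)⁻¹ : k) • (𝓜 i).subtype)
    (hom_ext_of_mem (𝓜 := 𝓜) fun i m hm ↦ by lift m to 𝓜 i using hm; simp [smul_smul])
    (hom_ext_of_mem (𝓜 := 𝓜) fun i m hm ↦ by lift m to 𝓜 i using hm; simp [smul_smul])

variable {𝓜}

theorem scale_of_mem (u : ι → kˣ) {i : ι} {m : M} (hm : m ∈ 𝓜 i) :
    scale 𝓜 u m = (u i : k) • m := by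
  lift m to 𝓜 i using hm
  simp [scale]

end Decomposition

section TensorGrading

variable {k ι κ M N L : Type*} [CommSemiring k] [AddCommMonoid M] [Module k M]
  [AddCommMonoid N] [Module k N] [AddCommMonoid L] [Module k L]
  (𝓜 : ι → Submodule k M) (𝓝 : κ → Submodule k N)

/-- The grading of a tensor product by pairs of degrees. -/
def tensorGrading (p : ι × κ) : Submodule k (M ⊗[k] N) :=
  Submodule.map₂ (TensorProduct.mk k M N) (𝓜 p.1) (𝓝 p.2)

variable {𝓜 𝓝}

theorem tmul_mem_tensorGrading {i : ι} {j : κ} {m : M} {n : N} (hm : m ∈ 𝓜 i) (hn : n ∈ 𝓝 j) :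
    m ⊗ₜ[k] n ∈ tensorGrading 𝓜 𝓝 (i, j) :=
  Submodule.apply_mem_map₂ _ hm hn

theorem tensorGrading_le {p : ι × κ} {S : Submodule k (M ⊗[k] N)} :
    tensorGrading 𝓜 𝓝 p ≤ S ↔ ∀ m ∈ 𝓜 p.1, ∀ n ∈ 𝓝 p.2, m ⊗ₜ n ∈ S :=
  Submodule.map₂_le

variable [DecidableEq ι] [DecidableEq κ] [Decomposition 𝓜] [Decomposition 𝓝]

theorem tensor_hom_ext_of_mem {f g : M ⊗[k] N →ₗ[k] L}
    (h : ∀ i, ∀ m ∈ 𝓜 i, ∀ j, ∀ n ∈ 𝓝 j, f (m ⊗ₜ n) = g (m ⊗ₜ n)) : f = g :=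
  TensorProduct.ext <| hom_ext_of_mem (𝓜 := 𝓜) fun i m hm ↦
    hom_ext_of_mem (𝓜 := 𝓝) fun j n hn ↦ h i m hm j n hn

noncomputable instance : Decomposition (tensorGrading 𝓜 𝓝) := by
  let piece (i : ι) (j : κ) : 𝓜 i →ₗ[k] 𝓝 j →ₗ[k] tensorGrading 𝓜 𝓝 (i, j) :=
    LinearMap.mk₂ k (fun m n ↦ ⟨m ⊗ₜ n, tmul_mem_tensorGrading m.2 n.2⟩)
      (fun _ _ _ ↦ Subtype.ext (add_tmul _ _ _)) (fun _ _ _ ↦ Subtype.ext (smul_tmul' _ _ _))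
      (fun _ _ _ ↦ Subtype.ext (tmul_add _ _ _)) (fun _ _ _ ↦ Subtype.ext (tmul_smul _ _ _))
  let D : M ⊗[k] N →ₗ[k] DirectSum (ι × κ) fun p ↦ tensorGrading 𝓜 𝓝 p :=
    TensorProduct.lift <| homogeneousLift 𝓜 fun i ↦ .flip <| homogeneousLift 𝓝 fun j ↦
      ((piece i j).compr₂ (DirectSum.lof k _ (fun p ↦ tensorGrading 𝓜 𝓝 p) (i, j))).flip
  have D_tmul {i : ι} {j : κ} (m : 𝓜 i) (n : 𝓝 j) :
      D ((m : M) ⊗ₜ (n : N)) = DirectSum.lof k _ _ (i, j) (piece i j m n) := by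
    simp [D]
  refine decompositionOfLinearMap _ D (fun z ↦ ?_) fun p z hz ↦ ?_
  · refine LinearMap.congr_fun (f := DirectSum.coeLinearMap _ ∘ₗ D) (g := .id) ?_ z
    refine tensor_hom_ext_of_mem (𝓜 := 𝓜) (𝓝 := 𝓝) fun i m hm j n hn ↦ ?_
    lift m to 𝓜 i using hm
    lift n to 𝓝 j using hn
    simp [D_tmul, piece]
  · refine (tensorGrading_le (S := (LinearMap.range _).comap D)).2 (fun m hm n hn ↦ ?_) hz
    lift m to 𝓜 p.1 using hm
    lift n to 𝓝 p.2 using hn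
    exact ⟨_, (D_tmul m n).symm⟩

theorem scale_tmul (u : ι × κ → kˣ) {i : ι} {j : κ} {m : M} {n : N} (hm : m ∈ 𝓜 i)
    (hn : n ∈ 𝓝 j) :
    scale (tensorGrading 𝓜 𝓝) u (m ⊗ₜ n) = (u (i, j) : k) • m ⊗ₜ[k] n :=
  scale_of_mem u (tmul_mem_tensorGrading hm hn)

end TensorGrading

section GradedMonoid

variable {k A B Λ Γ : Type*} [CommSemiring k] [Semiring Λ] [Algebra k Λ] [Semiring Γ] [Algebra k Γ]

instance [AddMonoid A] [AddMonoid B] (𝒜 : A → Submodule k Λ) (ℬ : B → Submodule k Γ)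
    [SetLike.GradedMonoid 𝒜] [SetLike.GradedMonoid ℬ] :
    SetLike.GradedMonoid (tensorGrading 𝒜 ℬ) where
  one_mem := tmul_mem_tensorGrading (SetLike.one_mem_graded 𝒜) (SetLike.one_mem_graded ℬ)
  mul_mem p q x y hx hy := by
    refine (tensorGrading_le (S := (tensorGrading 𝒜 ℬ (p + q)).comap (LinearMap.mulRight k y))).2
      (fun l hl g hg ↦ ?_) hx
    refine (tensorGrading_le
      (S := (tensorGrading 𝒜 ℬ (p + q)).comap (LinearMap.mulLeft k (l ⊗ₜ g)))).2
      (fun l' hl' g' hg' ↦ ?_) hy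
    rw [Submodule.mem_comap, LinearMap.mulLeft_apply, Algebra.TensorProduct.tmul_mul_tmul]
    exact tmul_mem_tensorGrading (SetLike.mul_mem_graded hl hl') (SetLike.mul_mem_graded hg hg')

/-- The grading of the opposite algebra by the same degrees. -/
def opGrading (𝒜 : A → Submodule k Λ) (a : A) : Submodule k Λᵐᵒᵖ :=
  (𝒜 a).comap (opLinearEquiv k).symm.toLinearMap

theorem op_mem_opGrading {𝒜 : A → Submodule k Λ} {a : A} {l : Λ} (hl : l ∈ 𝒜 a) :
    op l ∈ opGrading 𝒜 a :=
  hl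

noncomputable instance [DecidableEq A] (𝒜 : A → Submodule k Λ) [Decomposition 𝒜] :
    Decomposition (opGrading 𝒜) := by
  let opPiece (a : A) : 𝒜 a →ₗ[k] opGrading 𝒜 a :=
    (opLinearEquiv k).toLinearMap.restrict fun _ ↦ op_mem_opGrading
  let D : Λᵐᵒᵖ →ₗ[k] DirectSum A fun a ↦ opGrading 𝒜 a :=
    homogeneousLift 𝒜 (fun a ↦ DirectSum.lof k A (fun a ↦ opGrading 𝒜 a) a ∘ₗ opPiece a) ∘ₗ
      (opLinearEquiv k).symm.toLinearMap
  have D_op {a : A} (l : 𝒜 a) : D (op l) = DirectSum.lof k A _ a (opPiece a l) := by simp [D]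
  refine decompositionOfLinearMap _ D (fun x ↦ ?_) fun a x hx ↦ ⟨_, (D_op ⟨unop x, hx⟩).symm⟩
  obtain ⟨l, rfl⟩ := op_surjective x
  refine LinearMap.congr_fun (f := DirectSum.coeLinearMap _ ∘ₗ D ∘ₗ (opLinearEquiv k).toLinearMap)
    (g := (opLinearEquiv k).toLinearMap) (hom_ext_of_mem (𝓜 := 𝒜) fun a l hl ↦ ?_) l
  exact (congrArg _ (D_op ⟨l, hl⟩)).trans (DirectSum.coeLinearMap_lof _ _ _)

instance [AddCommMonoid A] (𝒜 : A → Submodule k Λ) [SetLike.GradedMonoid 𝒜] :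
    SetLike.GradedMonoid (opGrading 𝒜) where
  one_mem := op_mem_opGrading (SetLike.one_mem_graded 𝒜)
  mul_mem a a' x y hx hy := by
    change unop y * unop x ∈ 𝒜 (a + a')
    exact add_comm a' a ▸ SetLike.mul_mem_graded hy hx

end GradedMonoid

section GradedSection

variable {k C E M F : Type*} [CommSemiring k] [Semiring E] [Algebra k E]
  [AddCommMonoid M] [Module k M] [Module E M] [IsScalarTower k E M]
  [AddCommMonoid F] [Module k F] [Module E F] [IsScalarTower k E F]

theorem map_smul_of_adjoin_eq_top {S : Set E} (hS : Algebra.adjoin k S = ⊤) (f : M →ₗ[k] F)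
    (hf : ∀ x ∈ S, ∀ m, f (x • m) = x • f m) (r : E) (m : M) : f (r • m) = r • f m := by
  have hr : r ∈ Algebra.adjoin k S := hS ▸ Algebra.mem_top
  induction hr using Algebra.adjoin_induction generalizing m with
  | mem x hx => exact hf x hx m
  | algebraMap c => simp only [algebraMap_smul, map_smul]
  | add x y _ _ hx hy => simp only [add_smul, map_add, hx, hy]
  | mul x y _ _ hx hy => rw [mul_smul, hx, hy, mul_smul]

variable [DecidableEq C] (𝓜 : C → Submodule k M) [Decomposition 𝓜]
  (𝓕 : C → Submodule k F) [Decomposition 𝓕]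

/-- The projection of `M` onto its homogeneous component of degree `c`. -/
def homogeneousProj (c : C) : M →ₗ[k] M :=
  (𝓜 c).subtype ∘ₗ DirectSum.component k C _ c ∘ₗ (DirectSum.decomposeLinearEquiv 𝓜).toLinearMap

theorem homogeneousProj_mem (c : C) (m : M) : homogeneousProj 𝓜 c m ∈ 𝓜 c :=
  Subtype.property _

variable {𝓜 𝓕}

theorem homogeneousProj_of_mem {c : C} {m : M} (hm : m ∈ 𝓜 c) : homogeneousProj 𝓜 c m = m :=
  DirectSum.decompose_of_mem_same 𝓜 hm

theorem homogeneousProj_of_mem_of_ne {c d : C} {m : M} (hm : m ∈ 𝓜 c) (hcd : c ≠ d) :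
    homogeneousProj 𝓜 d m = 0 :=
  DirectSum.decompose_of_mem_ne 𝓜 hm hcd

theorem homogeneousProj_map {f : M →ₗ[k] F} {φ : C → C} (hφ : φ.Injective)
    (hf : ∀ c, ∀ m ∈ 𝓜 c, f m ∈ 𝓕 (φ c)) (c : C) (m : M) :
    homogeneousProj 𝓕 (φ c) (f m) = f (homogeneousProj 𝓜 c m) := by
  refine LinearMap.congr_fun (f := homogeneousProj 𝓕 (φ c) ∘ₗ f)
    (g := f ∘ₗ homogeneousProj 𝓜 c) (hom_ext_of_mem (𝓜 := 𝓜) fun d m hm ↦ ?_) m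
  by_cases hdc : d = c
  · subst hdc
    simp [homogeneousProj_of_mem hm, homogeneousProj_of_mem (hf d m hm)]
  · simp [homogeneousProj_of_mem_of_ne hm hdc,
      homogeneousProj_of_mem_of_ne (hf d m hm) (hφ.ne hdc)]

theorem exists_graded_section [Module.Projective E M] {S : Set E} (hS : Algebra.adjoin k S = ⊤)
    (hshift : ∀ x ∈ S, ∃ φ : C → C, φ.Injective ∧
      (∀ c, ∀ m ∈ 𝓜 c, x • m ∈ 𝓜 (φ c)) ∧ ∀ c, ∀ z ∈ 𝓕 c, x • z ∈ 𝓕 (φ c))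
    {π : F →ₗ[E] M} (hπ : Function.Surjective π) (hπ_mem : ∀ c, ∀ z ∈ 𝓕 c, π z ∈ 𝓜 c) :
    ∃ σ : M →ₗ[E] F, π ∘ₗ σ = .id ∧ ∀ c, ∀ m ∈ 𝓜 c, σ m ∈ 𝓕 c := by
  obtain ⟨s, hs⟩ := Module.projective_lifting_property π .id hπ
  let σ : M →ₗ[k] F := homogeneousLift 𝓜 fun c ↦
    homogeneousProj 𝓕 c ∘ₗ s.restrictScalars k ∘ₗ (𝓜 c).subtype
  have σ_of_mem {c : C} {m : M} (hm : m ∈ 𝓜 c) : σ m = homogeneousProj 𝓕 c (s m) :=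
    homogeneousLift_coe _ (⟨m, hm⟩ : 𝓜 c)
  have σ_smul (x : E) (hx : x ∈ S) (m : M) : σ (x • m) = x • σ m := by
    obtain ⟨φ, hφ, hxM, hxF⟩ := hshift x hx
    refine LinearMap.congr_fun (f := σ ∘ₗ Algebra.lsmul k k M x) (g := Algebra.lsmul k k F x ∘ₗ σ)
      (hom_ext_of_mem (𝓜 := 𝓜) fun c m hm ↦ ?_) m
    calc σ (x • m) = homogeneousProj 𝓕 (φ c) (x • s m) := by rw [σ_of_mem (hxM c m hm), map_smul]
      _ = x • homogeneousProj 𝓕 c (s m) :=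
        homogeneousProj_map (f := Algebra.lsmul k k F x) hφ hxF c (s m)
      _ = x • σ m := by rw [σ_of_mem hm]
  refine ⟨{ σ with map_smul' := map_smul_of_adjoin_eq_top hS σ σ_smul }, ?_, fun c m hm ↦ ?_⟩
  · refine LinearMap.restrictScalars_injective k (hom_ext_of_mem (𝓜 := 𝓜) fun c m hm ↦ ?_)
    calc π (σ m) = π (homogeneousProj 𝓕 c (s m)) := by rw [σ_of_mem hm]
      _ = homogeneousProj 𝓜 c (π (s m)) :=
        (homogeneousProj_map (f := π.restrictScalars k) Function.injective_id hπ_mem c (s m)).symm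
      _ = m := by rw [show π (s m) = m from LinearMap.congr_fun hs m, homogeneousProj_of_mem hm]
  · exact (σ_of_mem hm).symm ▸ homogeneousProj_mem 𝓕 c (s m)

end GradedSection

section WeightSpace

variable {k S M : Type*} [Field k] [AddCommGroup M] [Module k M]

/-- The joint eigenspace of the operators `D s` with eigenvalues `c s`. -/
def weightSpace (D : S → Module.End k M) (c : S → k) : Submodule k M :=
  ⨅ s, (D s).eigenspace (c s)

theorem mem_weightSpace {D : S → Module.End k M} {c : S → k} {m : M} :
    m ∈ weightSpace D c ↔ ∀ s, D s m = c s • m := by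
  simp only [weightSpace, Submodule.mem_iInf, Module.End.mem_eigenspace_iff]

theorem commute_of_iSup_weightSpace_eq_top {D : S → Module.End k M}
    (hD : ⨆ c, weightSpace D c = ⊤) (s s' : S) : Commute (D s) (D s') := by
  suffices ⊤ ≤ LinearMap.eqLocus (D s * D s') (D s' * D s) from
    LinearMap.ext fun m ↦ this Submodule.mem_top
  refine hD ▸ iSup_le fun c m hm ↦ ?_
  rw [mem_weightSpace] at hm
  simp [hm, smul_comm (c s)]

theorem isInternal_weightSpace [DecidableEq (S → k)] {D : S → Module.End k M}
    (hD : ⨆ c, weightSpace D c = ⊤) : DirectSum.IsInternal (weightSpace D) := by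
  rw [DirectSum.isInternal_submodule_iff_iSupIndep_and_iSup_eq_top]
  refine ⟨?_, hD⟩
  refine (Module.End.independent_iInf_maxGenEigenspace_of_forall_mapsTo D fun s s' φ ↦
    Module.End.mapsTo_maxGenEigenspace_of_comm
      (commute_of_iSup_weightSpace_eq_top hD s' s) φ).mono fun c ↦ ?_
  exact iInf_mono fun s ↦ Module.End.eigenspace_le_maxGenEigenspace

theorem iSup_weightSpace_scale {ι : Type*} [DecidableEq ι] (𝓜 : ι → Submodule k M)
    [Decomposition 𝓜] (u : S → ι → kˣ) :
    ⨆ c, weightSpace (fun s ↦ (scale 𝓜 (u s)).toLinearMap) c = ⊤ := by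
  refine top_unique ((Decomposition.isInternal 𝓜).submodule_iSup_eq_top.ge.trans ?_)
  exact iSup_mono' fun i ↦ ⟨fun s ↦ u s i, fun m hm ↦ mem_weightSpace.2 fun s ↦ scale_of_mem _ hm⟩

theorem smul_mem_weightSpace {E : Type*} [Ring E] [Algebra k E] [Module E M] [IsScalarTower k E M]
    {D : S → Module.End k M} {x : E} {w : S → k} (hx : ∀ s m, D s (x • m) = w s • x • D s m)
    {c : S → k} {m : M} (hm : m ∈ weightSpace D c) : x • m ∈ weightSpace D (w * c) :=
  mem_weightSpace.2 fun s ↦ by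
    rw [hx, mem_weightSpace.1 hm, smul_algebra_smul_comm, smul_smul, Pi.mul_apply]

theorem exists_section_commuting {E F : Type*} [Ring E] [Algebra k E] [Module E M]
    [IsScalarTower k E M] [AddCommGroup F] [Module k F] [Module E F] [IsScalarTower k E F]
    [Module.Projective E M] {DM : S → Module.End k M} {DF : S → Module.End k F}
    (hDM : ⨆ c, weightSpace DM c = ⊤) (hDF : ⨆ c, weightSpace DF c = ⊤)
    {X : Set E} (hX : Algebra.adjoin k X = ⊤)
    (hweight : ∀ x ∈ X, ∃ w : S → kˣ, (∀ s m, DM s (x • m) = (w s : k) • x • DM s m) ∧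
      ∀ s z, DF s (x • z) = (w s : k) • x • DF s z)
    {π : F →ₗ[E] M} (hπ : Function.Surjective π) (hπD : ∀ s z, π (DF s z) = DM s (π z)) :
    ∃ σ : M →ₗ[E] F, π ∘ₗ σ = .id ∧ ∀ s m, σ (DM s m) = DF s (σ m) := by
  classical
  let _ : Decomposition (weightSpace DM) := (isInternal_weightSpace hDM).chooseDecomposition
  let _ : Decomposition (weightSpace DF) := (isInternal_weightSpace hDF).chooseDecomposition
  have hshift (x : E) (hx : x ∈ X) : ∃ φ : (S → k) → (S → k), φ.Injective ∧
      (∀ c, ∀ m ∈ weightSpace DM c, x • m ∈ weightSpace DM (φ c)) ∧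
      ∀ c, ∀ z ∈ weightSpace DF c, x • z ∈ weightSpace DF (φ c) := by
    obtain ⟨w, hwM, hwF⟩ := hweight x hx
    refine ⟨fun c s ↦ w s * c s, fun c d hcd ↦ funext fun s ↦ (w s).mul_right_inj.1 ?_,
      fun _ _ ↦ smul_mem_weightSpace hwM, fun _ _ ↦ smul_mem_weightSpace hwF⟩
    exact congrFun hcd s
  have π_mem (c : S → k) (z : F) (hz : z ∈ weightSpace DF c) : π z ∈ weightSpace DM c :=
    mem_weightSpace.2 fun s ↦ by
      rw [← hπD, mem_weightSpace.1 hz, LinearMap.map_smul_of_tower]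
  obtain ⟨σ, π_σ, σ_mem⟩ := exists_graded_section hX hshift hπ π_mem
  refine ⟨σ, π_σ, fun s m ↦ ?_⟩
  refine LinearMap.congr_fun (f := σ.restrictScalars k ∘ₗ DM s) (g := DF s ∘ₗ σ.restrictScalars k)
    (hom_ext_of_mem (𝓜 := weightSpace DM) fun c m hm ↦ ?_) m
  simp [mem_weightSpace.1 hm s, mem_weightSpace.1 (σ_mem c m hm) s]

end WeightSpace

section ActionMap

variable (k E P : Type*) [CommSemiring k] [Semiring E] [Algebra k E]
  [AddCommMonoid P] [Module k P] [Module E P] [IsScalarTower k E P]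

/-- The action `x ⊗ p ↦ x • p` as a map from the free `E`-module on the underlying space of `P`. -/
noncomputable def actionMap : E ⊗[k] P →ₗ[E] P :=
  AlgebraTensorModule.lift
    { (Algebra.lsmul k k P).toLinearMap with map_smul' := fun x y ↦ by ext; simp }

variable {k E P}

@[simp]
theorem actionMap_tmul (x : E) (p : P) : actionMap k E P (x ⊗ₜ p) = x • p :=
  rfl

theorem actionMap_surjective : Function.Surjective (actionMap k E P) := fun p ↦
  ⟨1 ⊗ₜ p, one_smul E p⟩

end ActionMap

section TensorModule

variable {k G I E P : Type*} [CommSemiring k] [Semiring E] [Algebra k E] [AddCommMonoid P]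
  [Module k P] [DecidableEq G] [DecidableEq I] {𝓔 : G → Submodule k E} [Decomposition 𝓔]
  {𝓟 : I → Submodule k P} [Decomposition 𝓟]

theorem adjoin_iUnion_eq_top : Algebra.adjoin k (⋃ n, (𝓔 n : Set E)) = ⊤ := by
  refine Algebra.toSubmodule_eq_top.1 (top_unique ?_)
  calc ⊤ = ⨆ n, 𝓔 n := (Decomposition.isInternal 𝓔).submodule_iSup_eq_top.symm
    _ ≤ _ := iSup_le fun n x hx ↦ Algebra.subset_adjoin (Set.mem_iUnion_of_mem n hx)

theorem scale_smul_tensor [AddMonoid G] [SetLike.GradedMonoid 𝓔] {χE : G → kˣ} {χP : I → kˣ}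
    (hχ : ∀ n n', χE (n + n') = χE n * χE n') {n : G} {x : E} (hx : x ∈ 𝓔 n) (z : E ⊗[k] P) :
    scale (tensorGrading 𝓔 𝓟) (fun j ↦ χE j.1 * χP j.2) (x • z) =
      (χE n : k) • x • scale (tensorGrading 𝓔 𝓟) (fun j ↦ χE j.1 * χP j.2) z := by
  set D := scale (tensorGrading 𝓔 𝓟) fun j ↦ χE j.1 * χP j.2
  refine LinearMap.congr_fun (f := D.toLinearMap ∘ₗ Algebra.lsmul k k _ x)
    (g := (χE n : k) • Algebra.lsmul k k _ x ∘ₗ D.toLinearMap)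
    (tensor_hom_ext_of_mem (𝓜 := 𝓔) (𝓝 := 𝓟) fun n' y hy i p hp ↦ ?_) z
  have D_tmul : D (y ⊗ₜ p) = ((χE n' * χP i : kˣ) : k) • y ⊗ₜ[k] p := scale_tmul _ hy hp
  have D_smul_tmul : D ((x * y) ⊗ₜ p) = ((χE (n + n') * χP i : kˣ) : k) • (x * y) ⊗ₜ[k] p :=
    scale_tmul _ (SetLike.mul_mem_graded hx hy) hp
  simp [smul_tmul', D_tmul, D_smul_tmul, hχ, smul_smul, mul_assoc]

end TensorModule

section TwistCompatible

variable {k G I E P : Type*} [CommSemiring k] [Semiring E] [Algebra k E] [AddCommMonoid P]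
  [Module k P] [Module E P] [IsScalarTower k E P] [DecidableEq I]
  (𝓔 : G → Submodule k E) (𝓟 : I → Submodule k P) [Decomposition 𝓟]

/-- The diagonal operator of `P` with eigenvalues `χP` is semilinear with respect to the diagonal
operator of `E` with eigenvalues `χE`. -/
def TwistCompatible (χE : G → kˣ) (χP : I → kˣ) : Prop :=
  ∀ n, ∀ x ∈ 𝓔 n, ∀ p, scale 𝓟 χP (x • p) = (χE n : k) • x • scale 𝓟 χP p

variable {𝓔 𝓟} [DecidableEq G] [Decomposition 𝓔]

theorem TwistCompatible.actionMap_scale {χE : G → kˣ} {χP : I → kˣ}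
    (h : TwistCompatible 𝓔 𝓟 χE χP) (z : E ⊗[k] P) :
    actionMap k E P (scale (tensorGrading 𝓔 𝓟) (fun j ↦ χE j.1 * χP j.2) z) =
      scale 𝓟 χP (actionMap k E P z) := by
  set D := scale (tensorGrading 𝓔 𝓟) fun j ↦ χE j.1 * χP j.2
  refine LinearMap.congr_fun (f := (actionMap k E P).restrictScalars k ∘ₗ D.toLinearMap)
    (g := (scale 𝓟 χP).toLinearMap ∘ₗ (actionMap k E P).restrictScalars k)
    (tensor_hom_ext_of_mem (𝓜 := 𝓔) (𝓝 := 𝓟) fun n x hx i p hp ↦ ?_) z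
  have D_tmul : D (x ⊗ₜ p) = ((χE n * χP i : kˣ) : k) • x ⊗ₜ[k] p := scale_tmul _ hx hp
  simp [D_tmul, h n x hx p, scale_of_mem χP hp, smul_smul, smul_algebra_smul_comm _ x]

end TwistCompatible

theorem exists_actionMap_section {k G I S E P : Type*} [Field k] [Ring E] [Algebra k E]
    [AddCommGroup P] [Module k P] [Module E P] [IsScalarTower k E P] [AddMonoid G] [DecidableEq G]
    [DecidableEq I] {𝓔 : G → Submodule k E} [Decomposition 𝓔] [SetLike.GradedMonoid 𝓔]
    {𝓟 : I → Submodule k P} [Decomposition 𝓟] [Module.Projective E P]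
    (χE : S → G → kˣ) (χP : S → I → kˣ) (hχ : ∀ s n n', χE s (n + n') = χE s n * χE s n')
    (h : ∀ s, TwistCompatible 𝓔 𝓟 (χE s) (χP s)) :
    ∃ σ : P →ₗ[E] E ⊗[k] P, actionMap k E P ∘ₗ σ = .id ∧ ∀ s p, σ (scale 𝓟 (χP s) p) =
      scale (tensorGrading 𝓔 𝓟) (fun j ↦ χE s j.1 * χP s j.2) (σ p) := by
  refine exists_section_commuting (iSup_weightSpace_scale 𝓟 χP)
    (iSup_weightSpace_scale (tensorGrading 𝓔 𝓟) fun s j ↦ χE s j.1 * χP s j.2)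
    (adjoin_iUnion_eq_top (𝓔 := 𝓔)) (fun x hx ↦ ?_) actionMap_surjective
    fun s ↦ (h s).actionMap_scale
  obtain ⟨n, hx⟩ := Set.mem_iUnion.1 hx
  exact ⟨fun s ↦ χE s n, fun s ↦ h s n x hx, fun s ↦ scale_smul_tensor (hχ s) hx⟩

theorem exists_mem_smul_ne_zero {k E I P : Type*} [CommSemiring k] [Semiring E] [Algebra k E]
    [AddCommMonoid P] [Module k P] [Module E P] [IsScalarTower k E P] [DecidableEq I]
    {𝓟 : I → Submodule k P} [Decomposition 𝓟] {x : E} {p : P} (hxp : x • p ≠ 0) :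
    ∃ i, ∃ p ∈ 𝓟 i, x • p ≠ 0 := by
  by_contra! hx
  exact hxp <| LinearMap.congr_fun (f := Algebra.lsmul k k P x) (g := 0)
    (hom_ext_of_mem (𝓜 := 𝓟) hx) p

section FreeComparison

variable {k G H I J E F P Q R M : Type*} [CommSemiring k]
  [AddCommMonoid E] [Module k E] [AddCommMonoid F] [Module k F]
  [AddCommMonoid P] [Module k P] [AddCommMonoid Q] [Module k Q]
  [AddCommMonoid R] [Module k R] [AddCommMonoid M] [Module k M]
  [DecidableEq G] [DecidableEq H] [DecidableEq I] [DecidableEq J]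
  (𝓔 : G → Submodule k E) (𝓕 : H → Submodule k F)
  (𝓟 : I → Submodule k P) (𝓠 : J → Submodule k Q)
  [Decomposition 𝓔] [Decomposition 𝓕] [Decomposition 𝓟] [Decomposition 𝓠]
  (Θ : E ⊗[k] F ≃ₗ[k] R) (Ψ : P ⊗[k] Q ≃ₗ[k] M) (α : I → H → kˣ) (β : G → J → kˣ)

/-- The identification of the tensor product of the free modules `E ⊗ P` and `F ⊗ Q` with the free
`R`-module on `M` that is compatible with the action maps. -/
noncomputable def freeComparison : (E ⊗[k] P) ⊗[k] (F ⊗[k] Q) ≃ₗ[k] R ⊗[k] M :=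
  scale (tensorGrading (tensorGrading 𝓔 𝓟) (tensorGrading 𝓕 𝓠))
      (fun d ↦ (α d.1.2 d.2.1 * β d.1.1 d.2.2)⁻¹) ≪≫ₗ
    TensorProduct.tensorTensorTensorComm k E P F Q ≪≫ₗ TensorProduct.congr Θ Ψ

/-- The map `M → R ⊗ M` induced by maps `P → E ⊗ P` and `Q → F ⊗ Q`. -/
noncomputable def tensorSection (σP : P →ₗ[k] E ⊗[k] P) (σQ : Q →ₗ[k] F ⊗[k] Q) :
    M →ₗ[k] R ⊗[k] M :=
  (freeComparison 𝓔 𝓕 𝓟 𝓠 Θ Ψ α β).toLinearMap ∘ₗ TensorProduct.map σP σQ ∘ₗ Ψ.symm.toLinearMap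

variable {𝓔 𝓕 𝓟 𝓠 Θ Ψ α β}

theorem freeComparison_tmul {n : G} {x : E} (hx : x ∈ 𝓔 n) {i : I} {p : P} (hp : p ∈ 𝓟 i) {m : H}
    {y : F} (hy : y ∈ 𝓕 m) {j : J} {q : Q} (hq : q ∈ 𝓠 j) :
    freeComparison 𝓔 𝓕 𝓟 𝓠 Θ Ψ α β ((x ⊗ₜ p) ⊗ₜ (y ⊗ₜ q)) =
      (((α i m * β n j)⁻¹ : kˣ) : k) • Θ (x ⊗ₜ y) ⊗ₜ Ψ (p ⊗ₜ q) := by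
  simp [freeComparison, scale_tmul _ (tmul_mem_tensorGrading hx hp) (tmul_mem_tensorGrading hy hq)]

theorem freeComparison_swap (z : E ⊗[k] P) (v : F ⊗[k] Q) :
    freeComparison 𝓕 𝓔 𝓠 𝓟 (TensorProduct.comm k F E ≪≫ₗ Θ) (TensorProduct.comm k Q P ≪≫ₗ Ψ)
      (flip β) (flip α) (v ⊗ₜ z) = freeComparison 𝓔 𝓕 𝓟 𝓠 Θ Ψ α β (z ⊗ₜ v) := by
  refine LinearMap.congr_fun (f := (freeComparison 𝓕 𝓔 𝓠 𝓟 (TensorProduct.comm k F E ≪≫ₗ Θ)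
      (TensorProduct.comm k Q P ≪≫ₗ Ψ) (flip β) (flip α)).toLinearMap ∘ₗ
        (TensorProduct.comm k (E ⊗[k] P) (F ⊗[k] Q)).toLinearMap)
    (g := (freeComparison 𝓔 𝓕 𝓟 𝓠 Θ Ψ α β).toLinearMap)
    (TensorProduct.ext <| tensor_hom_ext_of_mem (𝓜 := 𝓔) (𝓝 := 𝓟) fun n x hx i p hp ↦
      tensor_hom_ext_of_mem (𝓜 := 𝓕) (𝓝 := 𝓠) fun m y hy j q hq ↦ ?_) (z ⊗ₜ v)
  simp [freeComparison_tmul hx hp hy hq, freeComparison_tmul hy hq hx hp, flip, mul_comm]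

theorem tensorSection_apply (σP : P →ₗ[k] E ⊗[k] P) (σQ : Q →ₗ[k] F ⊗[k] Q) (p : P) (q : Q) :
    tensorSection 𝓔 𝓕 𝓟 𝓠 Θ Ψ α β σP σQ (Ψ (p ⊗ₜ q)) =
      freeComparison 𝓔 𝓕 𝓟 𝓠 Θ Ψ α β (σP p ⊗ₜ σQ q) := by
  simp [tensorSection]

theorem tensorSection_swap (σP : P →ₗ[k] E ⊗[k] P) (σQ : Q →ₗ[k] F ⊗[k] Q) :
    tensorSection 𝓕 𝓔 𝓠 𝓟 (TensorProduct.comm k F E ≪≫ₗ Θ) (TensorProduct.comm k Q P ≪≫ₗ Ψ)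
      (flip β) (flip α) σQ σP = tensorSection 𝓔 𝓕 𝓟 𝓠 Θ Ψ α β σP σQ := by
  refine (LinearMap.cancel_right Ψ.surjective).1 (TensorProduct.ext' fun p q ↦ ?_)
  simp [tensorSection, freeComparison_swap]

end FreeComparison

section TwistedSMul

variable {k G H I J E F P Q R M : Type*} [CommSemiring k] [AddMonoid G] [AddMonoid H]
  [Semiring E] [Algebra k E] [Semiring F] [Algebra k F] [Semiring R] [Algebra k R]
  [AddCommMonoid P] [Module k P] [Module E P] [AddCommMonoid Q] [Module k Q] [Module F Q]
  [AddCommMonoid M] [Module k M] [Module R M]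
  (𝓔 : G → Submodule k E) (𝓕 : H → Submodule k F)
  (𝓟 : I → Submodule k P) (𝓠 : J → Submodule k Q)
  (Θ : E ⊗[k] F ≃ₗ[k] R) (Ψ : P ⊗[k] Q ≃ₗ[k] M) (α : I → H → kˣ) (β : G → J → kˣ)

/-- Along `Θ` and `Ψ`, the ring `R` acts on `M` as the componentwise action of `E ⊗ F` on `P ⊗ Q`,
twisted by characters `α` for moving elements of `F` past `P` and `β` for moving elements of `E`
past `Q`. -/
structure IsTwistedSMul : Prop where
  char_left : ∀ i m m', α i (m + m') = α i m * α i m'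
  char_right : ∀ n n' j, β (n + n') j = β n j * β n' j
  tmul_smul_tmul : ∀ {n x m y i p j q}, x ∈ 𝓔 n → y ∈ 𝓕 m → p ∈ 𝓟 i → q ∈ 𝓠 j →
    Θ (x ⊗ₜ y) • Ψ (p ⊗ₜ q) = ((α i m : k) * β n j) • Ψ ((x • p) ⊗ₜ (y • q))

/-- Along `Θ`, the ring `R` is the tensor product of `E` and `F` with multiplication twisted by
bicharacters `α` (for moving `F` past `E` on the right) and `β` (for moving `E` past `F`). -/
structure IsTwistedMul (α β : G → H → kˣ) : Prop extends IsTwistedSMul 𝓔 𝓕 𝓔 𝓕 Θ Θ α β where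
  add_left : ∀ n n' m, α (n + n') m = α n m * α n' m
  add_right : ∀ n m m', β n (m + m') = β n m * β n m'

variable {𝓔 𝓕 𝓟 𝓠 Θ Ψ α β}

namespace IsTwistedSMul

theorem swap (h : IsTwistedSMul 𝓔 𝓕 𝓟 𝓠 Θ Ψ α β) :
    IsTwistedSMul 𝓕 𝓔 𝓠 𝓟 (TensorProduct.comm k F E ≪≫ₗ Θ) (TensorProduct.comm k Q P ≪≫ₗ Ψ)
      (flip β) (flip α) where
  char_left j n n' := h.char_right n n' j
  char_right m m' i := h.char_left i m m'
  tmul_smul_tmul hy hx hq hp := by simpa [flip, mul_comm] using h.tmul_smul_tmul hx hy hp hq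

theorem left_zero (h : IsTwistedSMul 𝓔 𝓕 𝓟 𝓠 Θ Ψ α β) (i : I) : α i 0 = 1 := by
  simpa using h.char_left i 0 0

theorem right_zero (h : IsTwistedSMul 𝓔 𝓕 𝓟 𝓠 Θ Ψ α β) (j : J) : β 0 j = 1 := by
  simpa using h.char_right 0 0 j

theorem tmul_one_smul_of_mem [SetLike.GradedMonoid 𝓕] (h : IsTwistedSMul 𝓔 𝓕 𝓟 𝓠 Θ Ψ α β)
    {n : G} {x : E} (hx : x ∈ 𝓔 n) {i : I} {p : P} (hp : p ∈ 𝓟 i) {j : J} {q : Q}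
    (hq : q ∈ 𝓠 j) : Θ (x ⊗ₜ 1) • Ψ (p ⊗ₜ q) = (β n j : k) • Ψ ((x • p) ⊗ₜ q) := by
  simpa [h.left_zero] using h.tmul_smul_tmul hx (SetLike.one_mem_graded 𝓕) hp hq

theorem one_tmul_smul_of_mem [SetLike.GradedMonoid 𝓔] (h : IsTwistedSMul 𝓔 𝓕 𝓟 𝓠 Θ Ψ α β)
    {m : H} {y : F} (hy : y ∈ 𝓕 m) {i : I} {p : P} (hp : p ∈ 𝓟 i) {j : J} {q : Q}
    (hq : q ∈ 𝓠 j) : Θ (1 ⊗ₜ y) • Ψ (p ⊗ₜ q) = (α i m : k) • Ψ (p ⊗ₜ (y • q)) := by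
  simpa [h.right_zero] using h.tmul_smul_tmul (SetLike.one_mem_graded 𝓔) hy hp hq

theorem tmul_one_mul_one_tmul [SetLike.GradedMonoid 𝓔] [SetLike.GradedMonoid 𝓕] {α β : G → H → kˣ}
    (h : IsTwistedSMul 𝓔 𝓕 𝓔 𝓕 Θ Θ α β) {n : G} {x : E} (hx : x ∈ 𝓔 n) {m : H} {y : F}
    (hy : y ∈ 𝓕 m) : Θ (x ⊗ₜ 1) * Θ (1 ⊗ₜ y) = (β n m : k) • Θ (x ⊗ₜ y) := by
  simpa using h.tmul_one_smul_of_mem hx (SetLike.one_mem_graded 𝓔) hy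

variable [IsScalarTower k E P] [IsScalarTower k R M]

theorem of_span [IsScalarTower k F Q] {sE : G → Set E} {sF : H → Set F} {sP : I → Set P}
    {sQ : J → Set Q} (hE : ∀ n, 𝓔 n = .span k (sE n)) (hF : ∀ m, 𝓕 m = .span k (sF m))
    (hP : ∀ i, 𝓟 i = .span k (sP i)) (hQ : ∀ j, 𝓠 j = .span k (sQ j))
    (hα : ∀ i m m', α i (m + m') = α i m * α i m') (hβ : ∀ n n' j, β (n + n') j = β n j * β n' j)
    (h : ∀ {n m i j}, ∀ x ∈ sE n, ∀ y ∈ sF m, ∀ p ∈ sP i, ∀ q ∈ sQ j,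
      Θ (x ⊗ₜ y) • Ψ (p ⊗ₜ q) = ((α i m : k) * β n j) • Ψ ((x • p) ⊗ₜ (y • q))) :
    IsTwistedSMul 𝓔 𝓕 𝓟 𝓠 Θ Ψ α β where
  char_left := hα
  char_right := hβ
  tmul_smul_tmul {n x m y i p j q} hx hy hp hq := by
    rw [hE] at hx
    rw [hF] at hy
    rw [hP] at hp
    rw [hQ] at hq
    induction hx, hy using Submodule.span_induction₂ with
    | mem_mem x y hx hy =>
      induction hp, hq using Submodule.span_induction₂ with
      | mem_mem p q hp hq => exact h x hx y hy p hp q hq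
      | zero_left | zero_right => simp
      | add_left | add_right => simp only [smul_add, add_tmul, tmul_add, map_add, *]
      | smul_left c _ _ _ _ ih | smul_right c _ _ _ _ ih =>
        simp only [smul_algebra_smul_comm c, ← smul_tmul', tmul_smul, map_smul, ih]
    | zero_left | zero_right => simp
    | add_left | add_right => simp only [add_smul, smul_add, add_tmul, tmul_add, map_add, *]
    | smul_left c _ _ _ _ ih | smul_right c _ _ _ _ ih =>
      simp only [smul_algebra_smul_comm c, smul_assoc, ← smul_tmul', tmul_smul, map_smul, ih]

variable [DecidableEq I] [DecidableEq J] [Decomposition 𝓟] [Decomposition 𝓠]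

theorem tmul_one_smul [SetLike.GradedMonoid 𝓕] (h : IsTwistedSMul 𝓔 𝓕 𝓟 𝓠 Θ Ψ α β) {n : G}
    {x : E} (hx : x ∈ 𝓔 n) (p : P) (q : Q) :
    Θ (x ⊗ₜ 1) • Ψ (p ⊗ₜ q) = Ψ ((x • p) ⊗ₜ scale 𝓠 (β n) q) := by
  refine LinearMap.congr_fun
    (f := Algebra.lsmul k k M (Θ (x ⊗ₜ 1)) ∘ₗ Ψ.toLinearMap)
    (g := Ψ.toLinearMap ∘ₗ TensorProduct.map (Algebra.lsmul k k P x) (scale 𝓠 (β n)).toLinearMap)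
    (tensor_hom_ext_of_mem (𝓜 := 𝓟) (𝓝 := 𝓠) fun i p hp j q hq ↦ ?_) (p ⊗ₜ q)
  simpa [scale_of_mem _ hq] using h.tmul_one_smul_of_mem hx hp hq

theorem map_smul_of_generators [DecidableEq G] [DecidableEq H] [Decomposition 𝓔] [Decomposition 𝓕]
    [SetLike.GradedMonoid 𝓔] [SetLike.GradedMonoid 𝓕] {αR βR : G → H → kˣ}
    (hR : IsTwistedSMul 𝓔 𝓕 𝓔 𝓕 Θ Θ αR βR) {N : Type*} [AddCommMonoid N] [Module k N] [Module R N]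
    [IsScalarTower k R N] (f : M →ₗ[k] N)
    (hE : ∀ n, ∀ x ∈ 𝓔 n, ∀ w, f (Θ (x ⊗ₜ 1) • w) = Θ (x ⊗ₜ 1) • f w)
    (hF : ∀ m, ∀ y ∈ 𝓕 m, ∀ w, f (Θ (1 ⊗ₜ y) • w) = Θ (1 ⊗ₜ y) • f w) (r : R) (w : M) :
    f (r • w) = r • f w := by
  obtain ⟨z, rfl⟩ := Θ.surjective r
  refine LinearMap.congr_fun
    (f := f ∘ₗ (LinearMap.toSpanSingleton R M w).restrictScalars k ∘ₗ Θ.toLinearMap)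
    (g := (LinearMap.toSpanSingleton R N (f w)).restrictScalars k ∘ₗ Θ.toLinearMap)
    (tensor_hom_ext_of_mem (𝓜 := 𝓔) (𝓝 := 𝓕) fun n x hx m y hy ↦ ?_) z
  have tmul_eq : Θ (x ⊗ₜ y) = (↑(βR n m)⁻¹ : k) • (Θ (x ⊗ₜ 1) * Θ (1 ⊗ₜ y)) := by
    simp [hR.tmul_one_mul_one_tmul hx hy, smul_smul]
  simp [tmul_eq, mul_smul, hE n x hx, hF m y hy]

theorem exists_linearEquiv [DecidableEq G] [DecidableEq H] [Decomposition 𝓔] [Decomposition 𝓕]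
    [SetLike.GradedMonoid 𝓔] [SetLike.GradedMonoid 𝓕] {Ψ : E ⊗[k] F ≃ₗ[k] M} {α β : G → H → kˣ}
    (h : IsTwistedSMul 𝓔 𝓕 𝓔 𝓕 Θ Ψ α β) :
    ∃ f : R ≃ₗ[R] M, ∀ r, f r = r • Ψ (1 ⊗ₜ 1) := by
  let f : R →ₗ[R] M := LinearMap.toSpanSingleton R M (Ψ (1 ⊗ₜ 1))
  let g : R ≃ₗ[k] M :=
    Θ.symm ≪≫ₗ scale (tensorGrading 𝓔 𝓕) (fun d ↦ α 0 d.2 * β d.1 0) ≪≫ₗ Ψ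
  have f_eq_g : f.restrictScalars k = g.toLinearMap := by
    refine (LinearMap.cancel_right Θ.surjective).1
      (tensor_hom_ext_of_mem (𝓜 := 𝓔) (𝓝 := 𝓕) fun n x hx m y hy ↦ ?_)
    have smul_one := h.tmul_smul_tmul hx hy (SetLike.one_mem_graded 𝓔) (SetLike.one_mem_graded 𝓕)
    simpa [f, g, scale_tmul _ hx hy] using smul_one
  exact ⟨.ofBijective f (congrArg DFunLike.coe f_eq_g ▸ g.bijective), fun _ ↦ rfl⟩

end IsTwistedSMul

section Comparison

variable [DecidableEq G] [DecidableEq H] [DecidableEq I] [DecidableEq J]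
  [Decomposition 𝓔] [Decomposition 𝓕] [Decomposition 𝓟] [Decomposition 𝓠]
  [IsScalarTower k E P] [IsScalarTower k F Q] [IsScalarTower k R M]

theorem actionMap_freeComparison (h : IsTwistedSMul 𝓔 𝓕 𝓟 𝓠 Θ Ψ α β) (z : E ⊗[k] P)
    (v : F ⊗[k] Q) : actionMap k R M (freeComparison 𝓔 𝓕 𝓟 𝓠 Θ Ψ α β (z ⊗ₜ v)) =
      Ψ (actionMap k E P z ⊗ₜ actionMap k F Q v) := by
  refine LinearMap.congr_fun (f := (actionMap k R M).restrictScalars k ∘ₗ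
      (freeComparison 𝓔 𝓕 𝓟 𝓠 Θ Ψ α β).toLinearMap)
    (g := Ψ.toLinearMap ∘ₗ TensorProduct.map ((actionMap k E P).restrictScalars k)
      ((actionMap k F Q).restrictScalars k))
    (TensorProduct.ext <| tensor_hom_ext_of_mem (𝓜 := 𝓔) (𝓝 := 𝓟) fun n x hx i p hp ↦
      tensor_hom_ext_of_mem (𝓜 := 𝓕) (𝓝 := 𝓠) fun m y hy j q hq ↦ ?_) (z ⊗ₜ v)
  have Φ_tmul := freeComparison_tmul (Θ := Θ) (Ψ := Ψ) (α := α) (β := β) hx hp hy hq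
  simp [Φ_tmul, h.tmul_smul_tmul hx hy hp hq, smul_smul, ← Units.val_mul, -Units.val_inv_eq_inv_val]

theorem actionMap_tensorSection (h : IsTwistedSMul 𝓔 𝓕 𝓟 𝓠 Θ Ψ α β) {σP : P →ₗ[k] E ⊗[k] P}
    {σQ : Q →ₗ[k] F ⊗[k] Q} (hσP : ∀ p, actionMap k E P (σP p) = p)
    (hσQ : ∀ q, actionMap k F Q (σQ q) = q) (w : M) :
    actionMap k R M (tensorSection 𝓔 𝓕 𝓟 𝓠 Θ Ψ α β σP σQ w) = w := by
  obtain ⟨u, rfl⟩ := Ψ.surjective w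
  refine LinearMap.congr_fun (f := (actionMap k R M).restrictScalars k ∘ₗ
      tensorSection 𝓔 𝓕 𝓟 𝓠 Θ Ψ α β σP σQ ∘ₗ Ψ.toLinearMap) (g := Ψ.toLinearMap)
    (TensorProduct.ext' fun p q ↦ ?_) u
  simp [tensorSection_apply, actionMap_freeComparison h, hσP, hσQ]

end Comparison

end TwistedSMul

section SmulFreeComparison

variable {k G H I J E F P Q R M : Type*} [CommSemiring k] [AddMonoid G] [AddMonoid H]
  [Semiring E] [Algebra k E] [Semiring F] [Algebra k F] [Semiring R] [Algebra k R]
  [AddCommMonoid P] [Module k P] [AddCommMonoid Q] [Module k Q] [AddCommMonoid M] [Module k M]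
  [DecidableEq G] [DecidableEq H] [DecidableEq I] [DecidableEq J]
  {𝓔 : G → Submodule k E} {𝓕 : H → Submodule k F} [SetLike.GradedMonoid 𝓔]
  [SetLike.GradedMonoid 𝓕] {𝓟 : I → Submodule k P} {𝓠 : J → Submodule k Q}
  [Decomposition 𝓔] [Decomposition 𝓕] [Decomposition 𝓟] [Decomposition 𝓠]
  {Θ : E ⊗[k] F ≃ₗ[k] R} {Ψ : P ⊗[k] Q ≃ₗ[k] M} {α : I → H → kˣ} {β : G → J → kˣ}

theorem smul_freeComparison {αR βR : G → H → kˣ}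
    (hR : IsTwistedSMul 𝓔 𝓕 𝓔 𝓕 Θ Θ αR βR) (hβ : ∀ n n' j, β (n + n') j = β n j * β n' j)
    {n : G} {x : E} (hx : x ∈ 𝓔 n) (z : E ⊗[k] P) (v : F ⊗[k] Q) :
    Θ (x ⊗ₜ 1) • freeComparison 𝓔 𝓕 𝓟 𝓠 Θ Ψ α β (z ⊗ₜ v) =
      freeComparison 𝓔 𝓕 𝓟 𝓠 Θ Ψ α β
        ((x • z) ⊗ₜ scale (tensorGrading 𝓕 𝓠) (fun d ↦ βR n d.1 * β n d.2) v) := by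
  set Φ := freeComparison 𝓔 𝓕 𝓟 𝓠 Θ Ψ α β
  set D := scale (tensorGrading 𝓕 𝓠) fun d ↦ βR n d.1 * β n d.2
  refine LinearMap.congr_fun (f := Algebra.lsmul k k _ (Θ (x ⊗ₜ 1)) ∘ₗ Φ.toLinearMap)
    (g := Φ.toLinearMap ∘ₗ TensorProduct.map (Algebra.lsmul k k _ x) D.toLinearMap)
    (TensorProduct.ext <| tensor_hom_ext_of_mem (𝓜 := 𝓔) (𝓝 := 𝓟) fun n' x' hx' i p hp ↦
      tensor_hom_ext_of_mem (𝓜 := 𝓕) (𝓝 := 𝓠) fun m y hy j q hq ↦ ?_) (z ⊗ₜ v)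
  have mul_eq : Θ (x ⊗ₜ 1) * Θ (x' ⊗ₜ y) = (βR n m : k) • Θ ((x * x') ⊗ₜ y) :=
    hR.tmul_one_smul_of_mem hx hx' hy
  have D_tmul : D (y ⊗ₜ q) = ((βR n m * β n j : kˣ) : k) • y ⊗ₜ[k] q := scale_tmul _ hy hq
  have Φ_tmul : Φ ((x' ⊗ₜ p) ⊗ₜ (y ⊗ₜ q)) = _ := freeComparison_tmul hx' hp hy hq
  have Φ_mul_tmul : Φ (((x * x') ⊗ₜ p) ⊗ₜ (y ⊗ₜ q)) = _ :=
    freeComparison_tmul (SetLike.mul_mem_graded hx hx') hp hy hq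
  have twist_eq : (α i m * β n' j)⁻¹ * βR n m = βR n m * β n j * (α i m * β (n + n') j)⁻¹ := by
    rw [hβ, mul_assoc, mul_left_comm (α i m), mul_inv (β n j)]
    simp [mul_comm]
  calc Θ (x ⊗ₜ 1) • Φ ((x' ⊗ₜ p) ⊗ₜ (y ⊗ₜ q))
      = (((α i m * β n' j)⁻¹ * βR n m : kˣ) : k) • Θ ((x * x') ⊗ₜ y) ⊗ₜ Ψ (p ⊗ₜ q) := by
        rw [Φ_tmul, smul_algebra_smul_comm, smul_tmul', smul_eq_mul, mul_eq, ← smul_tmul',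
          smul_smul, Units.val_mul]
    _ = Φ ((x • x' ⊗ₜ p) ⊗ₜ D (y ⊗ₜ q)) := by
        rw [twist_eq, D_tmul, smul_tmul' x, smul_eq_mul, tmul_smul, map_smul, Φ_mul_tmul, smul_smul,
          ← Units.val_mul]

end SmulFreeComparison

theorem tmul_right_injective {k P Q : Type*} [Field k] [AddCommGroup P] [Module k P]
    [AddCommGroup Q] [Module k Q] {p : P} (hp : p ≠ 0) :
    Function.Injective fun q : Q ↦ p ⊗ₜ[k] q := by
  obtain ⟨f, hf⟩ := Module.Projective.exists_dual_eq_one k hp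
  exact Function.LeftInverse.injective (g := TensorProduct.lid k Q ∘ f.rTensor Q) fun q ↦ by
    simp [hf]

section Projective

variable {k G H I J E F P Q R M : Type*} [Field k] [AddMonoid G] [AddMonoid H]
  [Ring E] [Algebra k E] [Ring F] [Algebra k F] [Ring R] [Algebra k R]
  [AddCommGroup P] [Module k P] [Module E P] [AddCommGroup Q] [Module k Q] [Module F Q]
  [AddCommGroup M] [Module k M] [Module R M]
  [IsScalarTower k E P] [IsScalarTower k F Q] [IsScalarTower k R M]
  {𝓔 : G → Submodule k E} {𝓕 : H → Submodule k F} [SetLike.GradedMonoid 𝓔]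
  [SetLike.GradedMonoid 𝓕] {𝓟 : I → Submodule k P} {𝓠 : J → Submodule k Q}
  [DecidableEq I] [DecidableEq J] [Decomposition 𝓟] [Decomposition 𝓠]
  {Θ : E ⊗[k] F ≃ₗ[k] R} {Ψ : P ⊗[k] Q ≃ₗ[k] M} {α : I → H → kˣ} {β : G → J → kˣ}
  {αR βR : G → H → kˣ}

-- Expanding both sides of `x • y • (p ⊗ q) = (x * y) • (p ⊗ q)` in `M` compares the two twists,
-- provided that `x • p ≠ 0`.
theorem IsTwistedSMul.twistCompatible_or_smul_eq_zero (hR : IsTwistedSMul 𝓔 𝓕 𝓔 𝓕 Θ Θ αR βR)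
    (h : IsTwistedSMul 𝓔 𝓕 𝓟 𝓠 Θ Ψ α β) (n : G) :
    TwistCompatible 𝓕 𝓠 (βR n) (β n) ∨ ∀ x ∈ 𝓔 n, ∀ p : P, x • p = 0 := by
  refine or_iff_not_imp_right.2 fun hn ↦ ?_
  push Not at hn
  obtain ⟨x, hx, p₀, hxp₀⟩ := hn
  obtain ⟨i, p, hp, hxp⟩ := exists_mem_smul_ne_zero (𝓟 := 𝓟) hxp₀
  intro m y hy q
  refine LinearMap.congr_fun (f := (scale 𝓠 (β n)).toLinearMap ∘ₗ Algebra.lsmul k k Q y)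
    (g := (βR n m : k) • Algebra.lsmul k k Q y ∘ₗ (scale 𝓠 (β n)).toLinearMap)
    (hom_ext_of_mem (𝓜 := 𝓠) fun j q hq ↦ ?_) q
  refine tmul_right_injective hxp (Ψ.injective (smul_right_injective M (α i m).ne_zero ?_))
  change (α i m : k) • _ = (α i m : k) • _
  calc (α i m : k) • Ψ ((x • p) ⊗ₜ scale 𝓠 (β n) (y • q))
      = Θ (x ⊗ₜ 1) • Θ (1 ⊗ₜ y) • Ψ (p ⊗ₜ q) := by
        rw [h.one_tmul_smul_of_mem hy hp hq, smul_algebra_smul_comm, h.tmul_one_smul hx]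
    _ = (βR n m : k) • Θ (x ⊗ₜ y) • Ψ (p ⊗ₜ q) := by
        rw [← mul_smul, hR.tmul_one_mul_one_tmul hx hy, smul_assoc]
    _ = (α i m : k) • Ψ ((x • p) ⊗ₜ ((βR n m : k) • y • scale 𝓠 (β n) q)) := by
        rw [h.tmul_smul_tmul hx hy hp hq, scale_of_mem _ hq, smul_algebra_smul_comm (β n j : k) y,
          tmul_smul (βR n m : k), tmul_smul (β n j : k), map_smul, map_smul, smul_smul, smul_smul,
          smul_smul, mul_left_comm, mul_assoc]

variable [DecidableEq G] [DecidableEq H] [Decomposition 𝓔] [Decomposition 𝓕]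

theorem tensorSection_smul (hR : IsTwistedSMul 𝓔 𝓕 𝓔 𝓕 Θ Θ αR βR)
    (h : IsTwistedSMul 𝓔 𝓕 𝓟 𝓠 Θ Ψ α β) (σP : P →ₗ[E] E ⊗[k] P) (σQ : Q →ₗ[k] F ⊗[k] Q)
    (hσQ : ∀ n, TwistCompatible 𝓕 𝓠 (βR n) (β n) → ∀ q, σQ (scale 𝓠 (β n) q) =
      scale (tensorGrading 𝓕 𝓠) (fun d ↦ βR n d.1 * β n d.2) (σQ q))
    {n : G} {x : E} (hx : x ∈ 𝓔 n) (w : M) :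
    tensorSection 𝓔 𝓕 𝓟 𝓠 Θ Ψ α β (σP.restrictScalars k) σQ (Θ (x ⊗ₜ 1) • w) =
      Θ (x ⊗ₜ 1) • tensorSection 𝓔 𝓕 𝓟 𝓠 Θ Ψ α β (σP.restrictScalars k) σQ w := by
  set σ := tensorSection 𝓔 𝓕 𝓟 𝓠 Θ Ψ α β (σP.restrictScalars k) σQ
  obtain ⟨u, rfl⟩ := Ψ.surjective w
  refine LinearMap.congr_fun (f := σ ∘ₗ Algebra.lsmul k k M (Θ (x ⊗ₜ 1)) ∘ₗ Ψ.toLinearMap)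
    (g := Algebra.lsmul k k _ (Θ (x ⊗ₜ 1)) ∘ₗ σ ∘ₗ Ψ.toLinearMap)
    (TensorProduct.ext' fun p q ↦ ?_) u
  change σ (Θ (x ⊗ₜ 1) • Ψ (p ⊗ₜ q)) = Θ (x ⊗ₜ 1) • σ (Ψ (p ⊗ₜ q))
  rw [h.tmul_one_smul hx, tensorSection_apply, tensorSection_apply,
    smul_freeComparison hR h.char_right hx, LinearMap.restrictScalars_apply,
    LinearMap.restrictScalars_apply, ← map_smul]
  obtain hn | hn := hR.twistCompatible_or_smul_eq_zero h n
  · rw [hσQ n hn]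
  · simp only [hn x hx p, map_zero, zero_tmul]

theorem IsTwistedSMul.projective (hR : IsTwistedMul 𝓔 𝓕 Θ αR βR)
    (h : IsTwistedSMul 𝓔 𝓕 𝓟 𝓠 Θ Ψ α β) [Module.Projective E P] [Module.Projective F Q] :
    Module.Projective R M := by
  obtain ⟨σP, action_σP, σP_scale⟩ := exists_actionMap_section (𝓔 := 𝓔) (𝓟 := 𝓟)
    (S := {m // TwistCompatible 𝓔 𝓟 (flip αR m) (flip α m)}) (fun m ↦ flip αR m)
    (fun m ↦ flip α m) (fun m n n' ↦ hR.add_left n n' m) Subtype.property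
  obtain ⟨σQ, action_σQ, σQ_scale⟩ := exists_actionMap_section (𝓔 := 𝓕) (𝓟 := 𝓠)
    (S := {n // TwistCompatible 𝓕 𝓠 (βR n) (β n)}) (fun n ↦ βR n)
    (fun n ↦ β n) (fun n ↦ hR.add_right n) Subtype.property
  let σ : M →ₗ[k] R ⊗[k] M :=
    tensorSection 𝓔 𝓕 𝓟 𝓠 Θ Ψ α β (σP.restrictScalars k) (σQ.restrictScalars k)
  have σ_swap : σ = tensorSection 𝓕 𝓔 𝓠 𝓟 (TensorProduct.comm k F E ≪≫ₗ Θ)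
      (TensorProduct.comm k Q P ≪≫ₗ Ψ) (flip β) (flip α) (σQ.restrictScalars k)
      (σP.restrictScalars k) := (tensorSection_swap _ _).symm
  have σ_smul : ∀ (r : R) (w : M), σ (r • w) = r • σ w := by
    refine hR.map_smul_of_generators σ (fun n x hx w ↦ ?_) fun m y hy w ↦ ?_
    · exact tensorSection_smul hR.toIsTwistedSMul h σP _ (fun n hn ↦ σQ_scale ⟨n, hn⟩) hx w
    · simpa [σ_swap] using tensorSection_smul hR.swap h.swap σQ (σP.restrictScalars k)
        (fun m hm ↦ σP_scale ⟨m, hm⟩) hy w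
  refine Module.Projective.of_split { σ with map_smul' := σ_smul } (actionMap k R M)
    (LinearMap.ext ?_)
  exact actionMap_tensorSection h (LinearMap.congr_fun action_σP) (LinearMap.congr_fun action_σQ)

end Projective

section Enveloping

variable {k A B Λ Γ T : Type*} [CommSemiring k] [Semiring Λ] [Algebra k Λ] [Semiring Γ]
  [Algebra k Γ] [Semiring T] [Algebra k T]

/-- The grading of the enveloping algebra `Λᵉ` by pairs of degrees; the degree used in the twist is
the sum of the two. -/
abbrev envGrading (𝒜 : A → Submodule k Λ) : A × A → Submodule k (Λ ⊗[k] Λᵐᵒᵖ) :=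
  tensorGrading 𝒜 (opGrading 𝒜)

theorem envGrading_eq_span (𝒜 : A → Submodule k Λ) (n : A × A) :
    envGrading 𝒜 n = .span k {x | ∃ l ∈ 𝒜 n.1, ∃ l' ∈ 𝒜 n.2, l ⊗ₜ op l' = x} := by
  refine (Submodule.map₂_eq_span_image2 _ _ _).trans (congrArg _ (Set.ext fun x ↦ ?_))
  exact ⟨fun ⟨l, hl, l', hl', hx⟩ ↦ ⟨l, hl, unop l', hl', hx⟩,
    fun ⟨l, hl, l', hl', hx⟩ ↦ ⟨l, hl, op l', hl', hx⟩⟩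

variable [DecidableEq A] [DecidableEq B] {𝒜 : A → Submodule k Λ} {ℬ : B → Submodule k Γ}
  [Decomposition 𝒜] [Decomposition ℬ]

variable (𝒜 ℬ) in
/-- The identification of `Λᵉ ⊗ Γᵉ` with `Tᵉ` induced by `e : Λ ⊗ Γ ≃ T`, rescaled so that it
becomes compatible with twisted multiplications. -/
noncomputable def envEquiv (t : A → B → kˣ) (e : Λ ⊗[k] Γ ≃ₗ[k] T) :
    (Λ ⊗[k] Λᵐᵒᵖ) ⊗[k] (Γ ⊗[k] Γᵐᵒᵖ) ≃ₗ[k] T ⊗[k] Tᵐᵒᵖ :=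
  scale (tensorGrading (envGrading 𝒜) (envGrading ℬ)) (fun d ↦ (t d.1.2 d.2.1)⁻¹) ≪≫ₗ
    TensorProduct.tensorTensorTensorComm k Λ Λᵐᵒᵖ Γ Γᵐᵒᵖ ≪≫ₗ
    TensorProduct.congr e (TensorProduct.congr (opLinearEquiv k).symm (opLinearEquiv k).symm ≪≫ₗ
      e ≪≫ₗ opLinearEquiv k)

theorem envEquiv_tmul (t : A → B → kˣ) (e : Λ ⊗[k] Γ ≃ₗ[k] T) {a a' : A} {b b' : B} {l l' : Λ}
    {g g' : Γ} (hl : l ∈ 𝒜 a) (hl' : l' ∈ 𝒜 a') (hg : g ∈ ℬ b) (hg' : g' ∈ ℬ b') :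
    envEquiv 𝒜 ℬ t e ((l ⊗ₜ op l') ⊗ₜ (g ⊗ₜ op g')) =
      (↑(t a' b)⁻¹ : k) • e (l ⊗ₜ g) ⊗ₜ op (e (l' ⊗ₜ g')) := by
  have hx := tmul_mem_tensorGrading hl (op_mem_opGrading hl')
  have hy := tmul_mem_tensorGrading hg (op_mem_opGrading hg')
  simp [envEquiv, scale_tmul _ hx hy]

end Enveloping

section TwistedEnveloping

variable {k A B Λ Γ T : Type*} [CommSemiring k] [AddCommMonoid A] [AddCommMonoid B] [DecidableEq A]
  [DecidableEq B] [Semiring Λ] [Algebra k Λ] [Semiring Γ] [Algebra k Γ] [Semiring T] [Algebra k T]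
  {𝒜 : A → Submodule k Λ} {ℬ : B → Submodule k Γ} [Decomposition 𝒜] [Decomposition ℬ]
  {t : A → B → kˣ} {e : Λ ⊗[k] Γ ≃ₗ[k] T}

theorem isTwistedSMul_envEquiv {I J P Q M : Type*} [AddCommMonoid P] [Module k P]
    [Module (Λ ⊗[k] Λᵐᵒᵖ) P] [IsScalarTower k (Λ ⊗[k] Λᵐᵒᵖ) P] [AddCommMonoid Q] [Module k Q]
    [Module (Γ ⊗[k] Γᵐᵒᵖ) Q] [IsScalarTower k (Γ ⊗[k] Γᵐᵒᵖ) Q] [AddCommMonoid M] [Module k M]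
    [Module (T ⊗[k] Tᵐᵒᵖ) M] [IsScalarTower k (T ⊗[k] Tᵐᵒᵖ) M]
    {𝓟 : I → Submodule k P} {𝓠 : J → Submodule k Q} {Ψ : P ⊗[k] Q ≃ₗ[k] M}
    {sP : I → Set P} {sQ : J → Set Q} {degP : I → A} {degQ : J → B}
    (ht₁ : ∀ a a' b, t (a + a') b = t a b * t a' b)
    (ht₂ : ∀ a b b', t a (b + b') = t a b * t a b')
    (hP : ∀ i, 𝓟 i = .span k (sP i)) (hQ : ∀ j, 𝓠 j = .span k (sQ j))
    (h : ∀ {a a' b b' i j}, ∀ l ∈ 𝒜 a, ∀ l' ∈ 𝒜 a', ∀ g ∈ ℬ b, ∀ g' ∈ ℬ b', ∀ p ∈ sP i, ∀ q ∈ sQ j,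
      (e (l ⊗ₜ g) ⊗ₜ[k] op (e (l' ⊗ₜ g'))) • Ψ (p ⊗ₜ q) =
        ((t (degP i) b : k) * t a' (degQ j) * t a' b) •
          Ψ (((l ⊗ₜ[k] op l') • p) ⊗ₜ ((g ⊗ₜ[k] op g') • q))) :
    IsTwistedSMul (envGrading 𝒜) (envGrading ℬ) 𝓟 𝓠 (envEquiv 𝒜 ℬ t e) Ψ
      (fun i m ↦ t (degP i) m.1) (fun n j ↦ t n.2 (degQ j)) := by
  refine .of_span (envGrading_eq_span 𝒜) (envGrading_eq_span ℬ) hP hQ (fun _ _ _ ↦ ht₂ _ _ _)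
    (fun _ _ _ ↦ ht₁ _ _ _) ?_
  rintro n m i j _ ⟨l, hl, l', hl', rfl⟩ _ ⟨g, hg, g', hg', rfl⟩ p hp q hq
  rw [envEquiv_tmul t e hl hl' hg hg', smul_assoc, h l hl l' hl' g hg g' hg' p hp q hq, smul_smul,
    mul_comm, Units.mul_inv_cancel_right]

theorem isTwistedMul_envEquiv [SetLike.GradedMonoid 𝒜] [SetLike.GradedMonoid ℬ]
    (ht₁ : ∀ a a' b, t (a + a') b = t a b * t a' b)
    (ht₂ : ∀ a b b', t a (b + b') = t a b * t a b')
    (hemul : ∀ {a b} (x x' : Λ) (y y' : Γ), x' ∈ 𝒜 a → y ∈ ℬ b →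
      e (x ⊗ₜ y) * e (x' ⊗ₜ y') = (t a b : k) • e ((x * x') ⊗ₜ (y * y'))) :
    IsTwistedMul (envGrading 𝒜) (envGrading ℬ) (envEquiv 𝒜 ℬ t e)
      (fun n m ↦ t (n.1 + n.2) m.1) (fun n m ↦ t n.2 (m.1 + m.2)) where
  toIsTwistedSMul := by
    refine isTwistedSMul_envEquiv ht₁ ht₂ (envGrading_eq_span 𝒜) (envGrading_eq_span ℬ) ?_
    rintro a₁ a₁' b₁ b₁' ⟨a₂, a₂'⟩ ⟨b₂, b₂'⟩ l₁ hl₁ l₁' hl₁' g₁ hg₁ g₁' hg₁'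
      _ ⟨l₂, hl₂, l₂', hl₂', rfl⟩ _ ⟨g₂, hg₂, g₂', hg₂', rfl⟩
    have mul_left := hemul l₁ l₂ g₁ g₂ hl₂ hg₁
    have mul_right := hemul l₂' l₁' g₂' g₁' hl₁' hg₂'
    have twist_eq : (t a₂' b₂)⁻¹ * t a₁' b₂' * t a₂ b₁ =
        t (a₂ + a₂') b₁ * t a₁' (b₂ + b₂') * t a₁' b₁ * (t (a₂' + a₁') (b₁ + b₂))⁻¹ := by
      rw [eq_mul_inv_iff_mul_eq, mul_assoc, mul_assoc, inv_mul_eq_iff_eq_mul]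
      simp only [ht₁, ht₂]
      ac_rfl
    rw [envEquiv_tmul t e hl₂ hl₂' hg₂ hg₂', smul_algebra_smul_comm, smul_eq_mul,
      Algebra.TensorProduct.tmul_mul_tmul, ← op_mul, mul_left, mul_right, smul_eq_mul, smul_eq_mul,
      Algebra.TensorProduct.tmul_mul_tmul, Algebra.TensorProduct.tmul_mul_tmul, ← op_mul, ← op_mul,
      envEquiv_tmul t e (SetLike.mul_mem_graded hl₁ hl₂) (SetLike.mul_mem_graded hl₂' hl₁')
        (SetLike.mul_mem_graded hg₁ hg₂) (SetLike.mul_mem_graded hg₂' hg₁'),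
      op_smul, tmul_smul, ← smul_tmul', smul_smul, smul_smul, smul_smul]
    exact congrArg (· • _) (mod_cast congrArg Units.val twist_eq)
  add_left n n' m := by
    simp only [Prod.fst_add, Prod.snd_add, ht₁]
    exact mul_mul_mul_comm _ _ _ _
  add_right n m m' := by
    simp only [Prod.fst_add, Prod.snd_add, ht₂]
    exact mul_mul_mul_comm _ _ _ _

end TwistedEnveloping

theorem stmt10_general {k A B Λ Γ T P Q : Type*} [Field k]
    [AddCommMonoid A] [AddCommMonoid B] [DecidableEq A] [DecidableEq B]
    [Ring Λ] [Algebra k Λ] [Ring Γ] [Algebra k Γ]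
    (𝒜 : A → Submodule k Λ) (ℬ : B → Submodule k Γ)
    [GradedAlgebra 𝒜] [GradedAlgebra ℬ]
    (t : A → B → kˣ)
    (ht₁ : ∀ a a' b, t (a + a') b = t a b * t a' b)
    (ht₂ : ∀ a b b', t a (b + b') = t a b * t a b')
    [Ring T] [Algebra k T] (e : (Λ ⊗[k] Γ) ≃ₗ[k] T)
    (hemul : ∀ {a b} (x x' : Λ) (y y' : Γ), x' ∈ 𝒜 a → y ∈ ℬ b →
      e (x ⊗ₜ y) * e (x' ⊗ₜ y') = (t a b : k) • e ((x * x') ⊗ₜ (y * y')))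
    (a : A) (b : B)
    [Module (T ⊗[k] Tᵐᵒᵖ) ((Λ ⊗[k] Λᵐᵒᵖ) ⊗[k] (Γ ⊗[k] Γᵐᵒᵖ))]
    [IsScalarTower k (T ⊗[k] Tᵐᵒᵖ) ((Λ ⊗[k] Λᵐᵒᵖ) ⊗[k] (Γ ⊗[k] Γᵐᵒᵖ))]
    (hW : ∀ (a1 a2 al : A) (b1 b2 bg : B) (l l' p p' : Λ) (g g' u u' : Γ),
      l' ∈ 𝒜 al → g ∈ ℬ bg → p ∈ 𝒜 a1 → p' ∈ 𝒜 a2 → u ∈ ℬ b1 → u' ∈ ℬ b2 →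
      (((e (l ⊗ₜ g)) ⊗ₜ op (e (l' ⊗ₜ g')) : T ⊗[k] Tᵐᵒᵖ)) •
          (((p ⊗ₜ op p') ⊗ₜ (u ⊗ₜ op u')) : (Λ ⊗[k] Λᵐᵒᵖ) ⊗[k] (Γ ⊗[k] Γᵐᵒᵖ)) =
        ((t (a1 + a2 + a) bg : k) * (t al (b1 + b2 + b) : k) * (t al bg : k)) •
          (((l * p) ⊗ₜ op (p' * l')) ⊗ₜ ((g * u) ⊗ₜ op (u' * g')) :
            (Λ ⊗[k] Λᵐᵒᵖ) ⊗[k] (Γ ⊗[k] Γᵐᵒᵖ)))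
    [AddCommGroup P] [Module k P] [Module (Λ ⊗[k] Λᵐᵒᵖ) P]
    [IsScalarTower k (Λ ⊗[k] Λᵐᵒᵖ) P]
    (𝓟 : A → Submodule k P) [DirectSum.Decomposition 𝓟]
    [Module.Projective (Λ ⊗[k] Λᵐᵒᵖ) P]
    [AddCommGroup Q] [Module k Q] [Module (Γ ⊗[k] Γᵐᵒᵖ) Q]
    [IsScalarTower k (Γ ⊗[k] Γᵐᵒᵖ) Q]
    (𝓠 : B → Submodule k Q) [DirectSum.Decomposition 𝓠]
    [Module.Projective (Γ ⊗[k] Γᵐᵒᵖ) Q]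
    [Module (T ⊗[k] Tᵐᵒᵖ) (P ⊗[k] Q)]
    [IsScalarTower k (T ⊗[k] Tᵐᵒᵖ) (P ⊗[k] Q)]
    (hPQ : ∀ (px al : A) (qy bg : B) (l l' : Λ) (g g' : Γ) (p : P) (q : Q),
      l' ∈ 𝒜 al → g ∈ ℬ bg → p ∈ 𝓟 px → q ∈ 𝓠 qy →
      (((e (l ⊗ₜ g)) ⊗ₜ op (e (l' ⊗ₜ g')) : T ⊗[k] Tᵐᵒᵖ)) • ((p ⊗ₜ q) : P ⊗[k] Q) =
        ((t px bg : k) * (t al qy : k) * (t al bg : k)) •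
          ((((l ⊗ₜ op l' : Λ ⊗[k] Λᵐᵒᵖ)) • p) ⊗ₜ[k] (((g ⊗ₜ op g' : Γ ⊗[k] Γᵐᵒᵖ)) • q))) :
    (∃ f : (T ⊗[k] Tᵐᵒᵖ) ≃ₗ[T ⊗[k] Tᵐᵒᵖ]
        ((Λ ⊗[k] Λᵐᵒᵖ) ⊗[k] (Γ ⊗[k] Γᵐᵒᵖ)),
      ∀ (al : A) (bg : B) (l l' : Λ) (g g' : Γ), l' ∈ 𝒜 al → g ∈ ℬ bg →
        f (((e (l ⊗ₜ g)) ⊗ₜ op (e (l' ⊗ₜ g')) : T ⊗[k] Tᵐᵒᵖ)) =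
          ((t al bg : k) * (t a bg : k) * (t al b : k)) •
            (((l ⊗ₜ op l') ⊗ₜ (g ⊗ₜ op g')) : (Λ ⊗[k] Λᵐᵒᵖ) ⊗[k] (Γ ⊗[k] Γᵐᵒᵖ))) ∧
    Module.Projective (T ⊗[k] Tᵐᵒᵖ) (P ⊗[k] Q) := by
  have hT := isTwistedMul_envEquiv ht₁ ht₂ hemul
  constructor
  · have hΛΓ : IsTwistedSMul (envGrading 𝒜) (envGrading ℬ) (envGrading 𝒜) (envGrading ℬ)
        (envEquiv 𝒜 ℬ t e) (.refl k _) (fun n m ↦ t (n.1 + n.2 + a) m.1)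
        (fun n m ↦ t n.2 (m.1 + m.2 + b)) := by
      refine isTwistedSMul_envEquiv ht₁ ht₂ (envGrading_eq_span 𝒜) (envGrading_eq_span ℬ) ?_
      rintro _ _ _ _ _ _ l - l' hl' g hg g' - _ ⟨p, hp, p', hp', rfl⟩ _ ⟨u, hu, u', hu', rfl⟩
      simpa only [LinearEquiv.refl_apply, smul_eq_mul, Algebra.TensorProduct.tmul_mul_tmul,
        ← op_mul] using hW _ _ _ _ _ _ l l' p p' g g' u u' hl' hg hp hp' hu hu'
    obtain ⟨f, hf⟩ := hΛΓ.exists_linearEquiv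
    refine ⟨f, fun al bg l l' g g' hl' hg ↦ (hf _).trans ?_⟩
    have smul_one := hW 0 0 al 0 0 bg l l' 1 1 g g' 1 1 hl' hg (SetLike.one_mem_graded 𝒜)
      (SetLike.one_mem_graded 𝒜) (SetLike.one_mem_graded ℬ) (SetLike.one_mem_graded ℬ)
    simpa [Algebra.TensorProduct.one_def, mul_assoc, mul_comm, mul_left_comm] using smul_one
  · have hM : IsTwistedSMul (envGrading 𝒜) (envGrading ℬ) 𝓟 𝓠 (envEquiv 𝒜 ℬ t e) (.refl k _)
        (fun i m ↦ t i m.1) (fun n j ↦ t n.2 j) :=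
      isTwistedSMul_envEquiv ht₁ ht₂ (fun i ↦ (𝓟 i).span_eq.symm) (fun j ↦ (𝓠 j).span_eq.symm)
        fun l _ l' hl' g hg g' _ p hp q hq ↦ hPQ _ _ _ _ l l' g g' p q hl' hg hp hq
    exact hM.projective hT

/-- For `a ∈ A` and `b ∈ B`, the map
`(l ⊗ g) ⊗ (l' ⊗ g') ↦ t⟨|l'|,|g|⟩ t⟨a,|g|⟩ t⟨|l'|,b⟩ (l ⊗ l') ⊗ (g ⊗ g')` is an
isomorphism of graded `(Λ ⊗ᵗ Γ)ᵉ`-modules `(Λ ⊗ᵗ Γ)ᵉ⟨a,b⟩ ≅ Λᵉ⟨a⟩ ⊗ᵗ Γᵉ⟨b⟩`.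
In particular, the twisted tensor product of a graded projective `Λᵉ`-module `P` and a
graded projective `Γᵉ`-module `Q` is a graded projective `(Λ ⊗ᵗ Γ)ᵉ`-module.
Here `R = T ⊗[k] Tᵐᵒᵖ` is the enveloping algebra of `T = Λ ⊗ᵗ Γ` (acting on itself by
left/right multiplication; shifting does not change the module structure), and
`W = (Λ ⊗[k] Λᵐᵒᵖ) ⊗[k] (Γ ⊗[k] Γᵐᵒᵖ)` is the underlying space of `Λᵉ⟨a⟩ ⊗ᵗ Γᵉ⟨b⟩`
with the hypothesised twisted `R`-action `hW`. -/
theorem stmt10 {k A B Λ Γ T P Q : Type} [Field k]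
    [AddCommGroup A] [AddCommGroup B] [DecidableEq A] [DecidableEq B]
    [Ring Λ] [Algebra k Λ] [Ring Γ] [Algebra k Γ]
    (𝒜 : A → Submodule k Λ) (ℬ : B → Submodule k Γ)
    [GradedAlgebra 𝒜] [GradedAlgebra ℬ]
    (t : A → B → kˣ)
    (ht₁ : ∀ a a' b, t (a + a') b = t a b * t a' b)
    (ht₂ : ∀ a b b', t a (b + b') = t a b * t a b')
    [Ring T] [Algebra k T] (e : (Λ ⊗[k] Γ) ≃ₗ[k] T)
    (he1 : e (1 ⊗ₜ 1) = 1)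
    (hemul : ∀ {a b} (x x' : Λ) (y y' : Γ), x' ∈ 𝒜 a → y ∈ ℬ b →
      e (x ⊗ₜ y) * e (x' ⊗ₜ y') = (t a b : k) • e ((x * x') ⊗ₜ (y * y')))
    (a : A) (b : B)
    -- the twisted `R = T ⊗ Tᵐᵒᵖ`-module structure on `W`, i.e. on `Λᵉ⟨a⟩ ⊗ᵗ Γᵉ⟨b⟩`
    [Module (T ⊗[k] Tᵐᵒᵖ) ((Λ ⊗[k] Λᵐᵒᵖ) ⊗[k] (Γ ⊗[k] Γᵐᵒᵖ))]
    [IsScalarTower k (T ⊗[k] Tᵐᵒᵖ) ((Λ ⊗[k] Λᵐᵒᵖ) ⊗[k] (Γ ⊗[k] Γᵐᵒᵖ))]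
    (hW : ∀ (a1 a2 al : A) (b1 b2 bg : B) (l l' p p' : Λ) (g g' u u' : Γ),
      l' ∈ 𝒜 al → g ∈ ℬ bg → p ∈ 𝒜 a1 → p' ∈ 𝒜 a2 → u ∈ ℬ b1 → u' ∈ ℬ b2 →
      (((e (l ⊗ₜ g)) ⊗ₜ op (e (l' ⊗ₜ g')) : T ⊗[k] Tᵐᵒᵖ)) •
          (((p ⊗ₜ op p') ⊗ₜ (u ⊗ₜ op u')) : (Λ ⊗[k] Λᵐᵒᵖ) ⊗[k] (Γ ⊗[k] Γᵐᵒᵖ)) =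
        ((t (a1 + a2 + a) bg : k) * (t al (b1 + b2 + b) : k) * (t al bg : k)) •
          ((((l * p) ⊗ₜ op (p' * l')) ⊗ₜ ((g * u) ⊗ₜ op (u' * g'))) : (Λ ⊗[k] Λᵐᵒᵖ) ⊗[k] (Γ ⊗[k] Γᵐᵒᵖ)))
    -- P a graded projective `Λᵉ`-module, Q a graded projective `Γᵉ`-module
    [AddCommGroup P] [Module k P] [Module (Λ ⊗[k] Λᵐᵒᵖ) P]
    [IsScalarTower k (Λ ⊗[k] Λᵐᵒᵖ) P]
    (𝓟 : A → Submodule k P) [DirectSum.Decomposition 𝓟]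
    [Module.Projective (Λ ⊗[k] Λᵐᵒᵖ) P]
    [AddCommGroup Q] [Module k Q] [Module (Γ ⊗[k] Γᵐᵒᵖ) Q]
    [IsScalarTower k (Γ ⊗[k] Γᵐᵒᵖ) Q]
    (𝓠 : B → Submodule k Q) [DirectSum.Decomposition 𝓠]
    [Module.Projective (Γ ⊗[k] Γᵐᵒᵖ) Q]
    -- the twisted `R`-module structure on `P ⊗ᵗ Q`
    [Module (T ⊗[k] Tᵐᵒᵖ) (P ⊗[k] Q)]
    [IsScalarTower k (T ⊗[k] Tᵐᵒᵖ) (P ⊗[k] Q)]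
    (hPQ : ∀ (px al : A) (qy bg : B) (l l' : Λ) (g g' : Γ) (p : P) (q : Q),
      l' ∈ 𝒜 al → g ∈ ℬ bg → p ∈ 𝓟 px → q ∈ 𝓠 qy →
      (((e (l ⊗ₜ g)) ⊗ₜ op (e (l' ⊗ₜ g')) : T ⊗[k] Tᵐᵒᵖ)) • ((p ⊗ₜ q) : P ⊗[k] Q) =
        ((t px bg : k) * (t al qy : k) * (t al bg : k)) •
          ((((l ⊗ₜ op l' : Λ ⊗[k] Λᵐᵒᵖ)) • p) ⊗ₜ[k] (((g ⊗ₜ op g' : Γ ⊗[k] Γᵐᵒᵖ)) • q))) :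
    -- the main isomorphism
    (∃ f : (T ⊗[k] Tᵐᵒᵖ) ≃ₗ[T ⊗[k] Tᵐᵒᵖ]
        ((Λ ⊗[k] Λᵐᵒᵖ) ⊗[k] (Γ ⊗[k] Γᵐᵒᵖ)),
      ∀ (al : A) (bg : B) (l l' : Λ) (g g' : Γ), l' ∈ 𝒜 al → g ∈ ℬ bg →
        f (((e (l ⊗ₜ g)) ⊗ₜ op (e (l' ⊗ₜ g')) : T ⊗[k] Tᵐᵒᵖ)) =
          ((t al bg : k) * (t a bg : k) * (t al b : k)) •
            (((l ⊗ₜ op l') ⊗ₜ (g ⊗ₜ op g')) : (Λ ⊗[k] Λᵐᵒᵖ) ⊗[k] (Γ ⊗[k] Γᵐᵒᵖ))) ∧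
    -- in particular: the twisted tensor product `P ⊗ᵗ Q` is projective
    Module.Projective (T ⊗[k] Tᵐᵒᵖ) (P ⊗[k] Q) :=
  stmt10_general 𝒜 ℬ t ht₁ ht₂ e hemul a b hW 𝓟 𝓠 hPQ
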